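/- Let f ∈ R be homogeneous of degree d and assume τ(f^{1−1/p}) ⊆ m and √τ(f^{1−1/p}) = m. Then δ(f) + d > −n(d−1); equivalently, M_e − (n+1)p^e + d > −n(d−1) for all e ≥ e_0. -/

import Mathlib

/-!
The bound reads `M_e ≥ (n + 1)(p^e - (d - 1))`, and it holds for every `e`.

Decomposing `f^(p-1)` over `R^p`, with a basis of `k` over `k^p`, shows that `τ = τ(f^{1-1/p})` is
generated by the images of `f^(p-1)` under Cartier operators (`cartier_mem_testIdeal`,
`mem_bracketPow_of_cartier_mem`). These are forms of degree at most `d(p-1)/p`, hence at most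
`D = d - 1` (`cartier_isHomogeneous`), so the forms of degree `D` in `τ` have no common zero outside
the origin (`mxI_le_of_forms_mem`). Over the algebraic closure, `n + 1` general linear combinations
`G_0, …, G_n` of them generate an ideal with radical `m` (`exists_system_of_parameters`: prime
avoidance and the Krull dimension of a polynomial ring).

Let `g ∉ m^{[e]}` be a form of degree `t` with `g τ ⊆ m^{[e]}`, and put `q = p^e`, `Q = p^j`. Then
`g^Q (G_0^Q, …, G_n^Q) ⊆ m^{[e+j]}`. Since `(G)` contains all forms of large degree, `(G)^L` contains
all forms of degree `≥ D L + O(1)`, and `(G)^((n+1)Q+1) ⊆ (G_0^Q, …, G_n^Q)` by pigeonhole; so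
`g^Q` multiplies all forms of degree `≥ (n+1) D Q + O(1)` into `m^{[e+j]}`. But `g^Q ∉ m^{[e+j]}`, so
some monomial multiple of `g^Q` has a nonzero coefficient at the socle monomial
`∏ x_i^(qQ-1)`. Hence `(n+1)(qQ-1) - Q t ≤ (n+1) D Q + O(1)`, and `Q → ∞` gives
`(n+1) q ≤ t + (n+1) D` (`degree_bound_of_system`). The minimum defining `M_e` is over a nonempty set
because `τ ⊆ m` (`MeSet_nonempty`).
-/

open MvPolynomial

noncomputable section

/-- `I^{[e]}`-style bracket power: the ideal generated by `q`-th powers of elements of `I`. -/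
def bracketPow {A : Type*} [CommRing A] (I : Ideal A) (q : ℕ) : Ideal A :=
  Ideal.span ((fun u => u ^ q) '' (I : Set A))

/-- The test ideal `τ(f^{1 - 1/p^e})`: the smallest ideal `a` with `f^{p^e - 1} ∈ a^{[e]}`. -/
def testIdeal {A : Type*} [CommRing A] (p : ℕ) (f : A) (e : ℕ) : Ideal A :=
  sInf {a : Ideal A | f ^ (p ^ e - 1) ∈ bracketPow a (p ^ e)}

/-- The homogeneous maximal ideal `m = (x_0, ..., x_n)`. -/
def mxI (k : Type*) [Field k] (n : ℕ) : Ideal (MvPolynomial (Fin (n + 1)) k) :=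
  Ideal.span (Set.range (X : Fin (n + 1) → MvPolynomial (Fin (n + 1)) k))

/-- The set of degrees of homogeneous elements of `(m^{[e]} : τ) \ m^{[e]}`. -/
def MeSet (k : Type*) [Field k] (n p : ℕ) (τ : Ideal (MvPolynomial (Fin (n + 1)) k))
    (e : ℕ) : Set ℕ :=
  {d : ℕ | ∃ g : MvPolynomial (Fin (n + 1)) k,
    g ∈ (bracketPow (mxI k n) (p ^ e)).colon τ ∧
    g ∉ bracketPow (mxI k n) (p ^ e) ∧ g.IsHomogeneous d}

/-- `M_e`: the minimal degree of a homogeneous element of `(m^{[e]} : τ) \ m^{[e]}`. -/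
def Me (k : Type*) [Field k] (n p : ℕ) (τ : Ideal (MvPolynomial (Fin (n + 1)) k))
    (e : ℕ) : ℕ :=
  sInf (MeSet k n p τ e)

/-- `e_0`: the least `e` with `τ ⊄ m^{[e]}`. -/
def e0 (k : Type*) [Field k] (n p : ℕ) (τ : Ideal (MvPolynomial (Fin (n + 1)) k)) : ℕ :=
  sInf {e : ℕ | ¬ τ ≤ bracketPow (mxI k n) (p ^ e)}

/-! ### Bracket powers -/

section Frobenius

variable {A : Type*} [CommRing A] (p : ℕ) [Fact p.Prime] [CharP A p]

theorem bracketPow_eq_map (I : Ideal A) (e : ℕ) :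
    bracketPow I (p ^ e) = I.map (iterateFrobenius A p e) := rfl

theorem pow_mem_bracketPow {I : Ideal A} {e j : ℕ} {u : A} (hu : u ∈ bracketPow I (p ^ e)) :
    u ^ p ^ j ∈ bracketPow I (p ^ (e + j)) := by
  rw [bracketPow_eq_map] at hu ⊢
  have h := Ideal.mem_map_of_mem (iterateFrobenius A p j) hu
  rw [Ideal.map_map] at h
  have hc : (iterateFrobenius A p j).comp (iterateFrobenius A p e)
      = iterateFrobenius A p (e + j) := by
    ext x
    simp [iterateFrobenius_def, ← pow_mul, pow_add]
  rwa [hc] at h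

end Frobenius

/-- `m^{[e]}` is the monomial ideal `(x_0 ^ (p ^ e), …, x_n ^ (p ^ e))`. -/
theorem mem_bracketPow_mxI {k : Type*} [Field k] {p n : ℕ} [Fact p.Prime] [CharP k p]
    (e : ℕ) (u : MvPolynomial (Fin (n + 1)) k) :
    u ∈ bracketPow (mxI k n) (p ^ e) ↔ ∀ a ∈ u.support, ∃ i, p ^ e ≤ a i := by
  have h : bracketPow (mxI k n) (p ^ e) = Ideal.span
      ((fun s => monomial s (1 : k)) '' Set.range fun i => Finsupp.single i (p ^ e)) := by
    rw [bracketPow_eq_map, mxI, Ideal.map_span, ← Set.range_comp, ← Set.range_comp]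
    congr 2
    ext1 i
    simp [iterateFrobenius_def, X_pow_eq_monomial]
  rw [h, mem_ideal_span_monomial_image]
  simp [Finsupp.single_le_iff]

theorem isHomogeneous_iff_degree {k σ : Type*} [Field k] {u : MvPolynomial σ k} {N : ℕ} :
    u.IsHomogeneous N ↔ ∀ a, coeff a u ≠ 0 → a.degree = N := by
  simp only [IsHomogeneous, IsWeightedHomogeneous, Finsupp.degree_eq_weight_one]
  rfl

theorem mxI_eq_idealOfVars (k : Type*) [Field k] (n : ℕ) :
    mxI k n = idealOfVars (Fin (n + 1)) k := rfl

/-- `M_e` is attained, because the socle generator `∏ x_i ^ (p ^ e - 1)` of `R / m^{[e]}` lies in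
the colon ideal. -/
theorem MeSet_nonempty {k : Type*} [Field k] {p n : ℕ} [Fact p.Prime] [CharP k p]
    {τ : Ideal (MvPolynomial (Fin (n + 1)) k)} (hτ : τ ≤ mxI k n) (e : ℕ) :
    (MeSet k n p τ e).Nonempty := by
  have hq : 0 < p ^ e := pow_pos (Fact.out : p.Prime).pos e
  let b : Fin (n + 1) →₀ ℕ := Finsupp.equivFunOnFinite.symm fun _ => p ^ e - 1
  refine ⟨b.degree, monomial b 1, ?_, ?_, isHomogeneous_monomial _ rfl⟩
  · rw [Submodule.mem_colon]
    intro t ht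
    have ht' := hτ ht
    have hmx : mxI k n ≤ Submodule.comap (LinearMap.mulLeft _ (monomial b (1 : k)))
        (bracketPow (mxI k n) (p ^ e)) := by
      refine Ideal.span_le.2 ?_
      rintro _ ⟨i, rfl⟩
      simp only [SetLike.mem_coe, Submodule.mem_comap, LinearMap.mulLeft_apply]
      rw [X, monomial_mul, mem_bracketPow_mxI]
      intro a ha
      rw [Finset.mem_singleton.1 (support_monomial_subset ha)]
      refine ⟨i, ?_⟩
      simp [b]
      omega
    exact hmx ht'
  · rw [mem_bracketPow_mxI]
    intro h
    obtain ⟨i, hi⟩ := h b (by simp [mem_support_iff])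
    simp [b] at hi
    omega

/-! ### The degree bound for `n + 1` forms -/

theorem iSup_pow_le {A : Type*} [CommRing A] {ι : Type*} [DecidableEq ι] (I : ι → Ideal A) (Q : ℕ)
    (s : Finset ι) :
    (⨆ i ∈ s, I i) ^ (s.card * Q + 1) ≤ ⨆ i ∈ s, I i ^ Q := by
  induction s using Finset.induction_on with
  | empty => simp
  | insert a s ha ih =>
    rw [Finset.iSup_insert, Finset.iSup_insert, Finset.card_insert_of_notMem ha]
    have : (s.card + 1) * Q + 1 = Q + (s.card * Q + 1) := by ring
    rw [this]
    exact Ideal.sup_pow_add_le_pow_sup_pow.trans (sup_le_sup le_rfl ih)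

/-- Pigeonhole: a product of more than `NQ` elements drawn from `N` generators is divisible by the
`Q`-th power of one of them. -/
theorem span_range_pow_le {A : Type*} [CommRing A] {N : ℕ} (G : Fin N → A) (Q : ℕ) :
    Ideal.span (Set.range G) ^ (N * Q + 1) ≤ Ideal.span (Set.range fun i => G i ^ Q) := by
  have h := iSup_pow_le (fun i => Ideal.span {G i}) Q Finset.univ
  simp only [Finset.mem_univ, iSup_pos, Finset.card_univ, Fintype.card_fin,
    Ideal.span_singleton_pow] at h
  rw [← Ideal.span_iUnion, ← Ideal.span_iUnion] at h
  simpa [Set.iUnion_singleton_eq_range] using h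

theorem coeff_smul_pow {k : Type*} [Field k] {σ : Type*} {p : ℕ} [Fact p.Prime] [CharP k p]
    (j : ℕ) (g : MvPolynomial σ k) (a : σ →₀ ℕ) :
    coeff (p ^ j • a) (g ^ p ^ j) = coeff a g ^ p ^ j := by
  rw [← map_iterateFrobenius_expand p g j, coeff_map, coeff_expand_smul]
  · simp [iterateFrobenius_def]
  · exact pow_ne_zero _ (Fact.out : p.Prime).ne_zero

attribute [local instance] MvPolynomial.gradedAlgebra

theorem coe_decompose_eq {k σ : Type*} [Field k] (u : MvPolynomial σ k) (N : ℕ) :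
    (DirectSum.decompose (homogeneousSubmodule σ k) u N : MvPolynomial σ k)
      = homogeneousComponent N u :=
  decomposition.decompose'_apply u N

/-- A form of degree `N` in an ideal generated by forms of degree `D` is a combination of the
generators whose coefficients are forms of degree `N - D`. -/
theorem exists_homogeneous_coeffs {k σ : Type*} [Field k] {N D r : ℕ}
    {G : Fin r → MvPolynomial σ k} (hG : ∀ i, (G i).IsHomogeneous D) (hDN : D ≤ N)
    {u : MvPolynomial σ k} (hu : u.IsHomogeneous N) (hmem : u ∈ Ideal.span (Set.range G)) :
    ∃ c : Fin r → MvPolynomial σ k, (∀ i, (c i).IsHomogeneous (N - D)) ∧ u = ∑ i, c i * G i := by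
  obtain ⟨c, hc⟩ := (Ideal.mem_span_range_iff_exists_fun).1 hmem
  refine ⟨fun i => homogeneousComponent (N - D) (c i),
    fun i => homogeneousComponent_isHomogeneous _ _, ?_⟩
  have h1 : homogeneousComponent N u = u := by
    rw [homogeneousComponent_of_mem hu, if_pos rfl]
  rw [← h1, ← hc, map_sum]
  refine Finset.sum_congr rfl fun i _ => ?_
  have := DirectSum.coe_decompose_mul_of_right_mem_of_le (homogeneousSubmodule σ k)
    (a := c i) (n := N) (hG i) hDN
  rwa [coe_decompose_eq, coe_decompose_eq] at this

/-- If the ideal `(G)` contains all forms of degree at least `s`, then its `L`-th power contains all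
forms of degree at least `s + D L`. -/
theorem mem_pow_of_isHomogeneous {k σ : Type*} [Field k] {D r s : ℕ}
    {G : Fin r → MvPolynomial σ k} (hG : ∀ i, (G i).IsHomogeneous D)
    (hs : ∀ N ≥ s, ∀ u : MvPolynomial σ k, u.IsHomogeneous N → u ∈ Ideal.span (Set.range G))
    (L : ℕ) : ∀ N ≥ s + D * L, ∀ u : MvPolynomial σ k, u.IsHomogeneous N →
      u ∈ Ideal.span (Set.range G) ^ L := by
  induction L with
  | zero => simp
  | succ L ih =>
    intro N hN u hu
    have hN' : s + D * L + D ≤ N := by rw [Nat.mul_succ] at hN; omega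
    obtain ⟨c, hc, rfl⟩ := exists_homogeneous_coeffs hG (by omega) hu
      (hs N (by omega) u hu)
    rw [pow_succ]
    exact Ideal.sum_mem _ fun i _ => Ideal.mul_mem_mul (ih _ (by omega) _ (hc i))
      (Ideal.subset_span ⟨i, rfl⟩)

/-- The degree bound for an `m`-primary ideal generated by `n + 1` forms of degree `D`. For
`Q = p ^ j` one has `g ^ Q * (G_i ^ Q) ⊆ m^{[qQ]}`, and `(G_i ^ Q)` contains all forms of degree
about `(n + 1) D Q`. On the other hand a monomial multiple of `g ^ Q` hits the socle degree
`(n + 1)(qQ - 1)` of `R / m^{[qQ]}`. Comparing degrees and letting `Q → ∞` gives the bound. -/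
theorem degree_bound_of_system {k : Type*} [Field k] {p n : ℕ} [Fact p.Prime] [CharP k p]
    {D e t : ℕ} {G : Fin (n + 1) → MvPolynomial (Fin (n + 1)) k}
    (hG : ∀ i, (G i).IsHomogeneous D)
    (hrad : mxI k n ≤ (Ideal.span (Set.range G)).radical)
    {g : MvPolynomial (Fin (n + 1)) k} (hg : g.IsHomogeneous t)
    (hgm : g ∉ bracketPow (mxI k n) (p ^ e))
    (hgG : ∀ i, g * G i ∈ bracketPow (mxI k n) (p ^ e)) :
    (n + 1) * p ^ e ≤ t + (n + 1) * D := by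
  obtain ⟨s, hs⟩ := Ideal.exists_pow_le_of_le_radical_of_fg hrad (IsNoetherian.noetherian _)
  have hs' : ∀ N ≥ s, ∀ u : MvPolynomial (Fin (n + 1)) k, u.IsHomogeneous N →
      u ∈ Ideal.span (Set.range G) := by
    intro N hN u hu
    apply hs
    rw [mxI_eq_idealOfVars, mem_pow_idealOfVars_iff]
    intro x hx
    rwa [isHomogeneous_iff_degree.1 hu x (mem_support_iff.1 hx)]
  rw [mem_bracketPow_mxI] at hgm
  push Not at hgm
  obtain ⟨a, ha, haq⟩ := hgm
  have hta : a.degree = t := isHomogeneous_iff_degree.1 hg a (mem_support_iff.1 ha)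
  by_contra! hlt
  -- `Q = p ^ j` is taken larger than the constant error term of the degree comparison
  obtain ⟨j, hj⟩ := pow_unbounded_of_one_lt (s + D + n + 1) (Fact.out : p.Prime).one_lt
  set q := p ^ e with hq
  set Q := p ^ j with hQ
  have hQ0 : 0 < Q := by omega
  have hqQ : p ^ (e + j) = q * Q := pow_add _ _ _
  have haQ : ∀ i, Q * a i ≤ q * Q - 1 := by
    intro i
    have : Q * a i < q * Q := by rw [mul_comm q]; exact Nat.mul_lt_mul_of_pos_left (haq i) hQ0
    omega
  let b : Fin (n + 1) →₀ ℕ := Finsupp.equivFunOnFinite.symm fun i => q * Q - 1 - Q * a i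
  have hb : ∀ i, b i + Q * a i = q * Q - 1 := fun i => by
    have := haQ i
    simp only [b, Finsupp.equivFunOnFinite_symm_apply_apply]
    omega
  have hbdeg : b.degree + Q * t + (n + 1) = (n + 1) * (q * Q) := by
    have h1 : ∑ i, (b i + Q * a i) = (n + 1) * (q * Q - 1) := by simp [hb]
    rw [Finset.sum_add_distrib, ← Finset.mul_sum, ← Finsupp.degree_eq_sum,
      ← Finsupp.degree_eq_sum, hta] at h1
    have h2 : 0 < q * Q := by rw [← hqQ]; exact pow_pos (Fact.out : p.Prime).pos _
    rw [h1]
    obtain ⟨w, hw⟩ : ∃ w, q * Q = w + 1 := ⟨q * Q - 1, by omega⟩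
    rw [hw]; simp; ring
  have hbmem : (monomial b (1 : k)) ∈ Ideal.span (Set.range fun i => G i ^ Q) := by
    apply span_range_pow_le G Q
    refine mem_pow_of_isHomogeneous hG hs' ((n + 1) * Q + 1) b.degree ?_ _
      (isHomogeneous_monomial _ rfl)
    have h3 : (t + (n + 1) * D + 1) * Q ≤ (n + 1) * q * Q := Nat.mul_le_mul_right _ hlt
    nlinarith
  have hsub : Ideal.span (Set.range fun i => G i ^ Q) ≤
      Submodule.comap (LinearMap.mulLeft _ (g ^ Q)) (bracketPow (mxI k n) (p ^ (e + j))) := by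
    refine Ideal.span_le.2 ?_
    rintro _ ⟨i, rfl⟩
    simp only [SetLike.mem_coe, Submodule.mem_comap, LinearMap.mulLeft_apply, ← mul_pow]
    exact pow_mem_bracketPow p (hgG i)
  have hmem : g ^ Q * monomial b 1 ∈ bracketPow (mxI k n) (p ^ (e + j)) := hsub hbmem
  rw [mem_bracketPow_mxI] at hmem
  obtain ⟨i, hi⟩ := hmem (Q • a + b) (by
    rw [mem_support_iff, coeff_mul_monomial, coeff_smul_pow, mul_one]
    exact pow_ne_zero _ (mem_support_iff.1 ha))
  have h4 := hb i
  have h5 : 0 < q * Q := by rw [← hqQ]; exact pow_pos (Fact.out : p.Prime).pos _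
  simp only [Finsupp.add_apply, Finsupp.smul_apply, smul_eq_mul, hqQ] at hi
  omega

/-! ### General members of a linear system -/

/-- Over an infinite field, a linear system whose only common zero is the origin contains
arbitrarily many members cutting out closed subsets of the expected codimension, away from the
origin. -/
theorem exists_members_height {k : Type*} [Field k] [Infinite k] {n : ℕ}
    (V : Submodule k (MvPolynomial (Fin (n + 1)) k))
    (hV : ∀ P : Ideal (MvPolynomial (Fin (n + 1)) k), P.IsPrime → (∀ v ∈ V, v ∈ P) → mxI k n ≤ P)
    (j : ℕ) : ∃ G : Fin j → MvPolynomial (Fin (n + 1)) k, (∀ i, G i ∈ V) ∧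
      ∀ P : Ideal (MvPolynomial (Fin (n + 1)) k), P.IsPrime → (∀ i, G i ∈ P) →
        mxI k n ≤ P ∨ (j : ℕ∞) ≤ P.height := by
  induction j with
  | zero => exact ⟨Fin.elim0, fun i => i.elim0, fun P _ _ => Or.inr (by simp)⟩
  | succ j ih =>
    obtain ⟨G, hGV, hG⟩ := ih
    let I := Ideal.span (Set.range G)
    have hfin : Finite {P : Ideal (MvPolynomial (Fin (n + 1)) k) //
        P ∈ I.minimalPrimes ∧ ¬ mxI k n ≤ P} :=
      (I.finite_minimalPrimes_of_isNoetherianRing.subset fun P hP => hP.1)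
    -- a general member avoids the finitely many minimal primes not containing `m`
    obtain ⟨v, hvV, hv⟩ : ∃ v ∈ V, ∀ P ∈ I.minimalPrimes, ¬ mxI k n ≤ P → v ∉ P := by
      by_contra! hcon
      obtain ⟨⟨P, hP, hPm⟩, hPtop⟩ := Subspace.exists_eq_top_of_iUnion_eq_univ
        (p := fun P : {P : Ideal (MvPolynomial (Fin (n + 1)) k) //
            P ∈ I.minimalPrimes ∧ ¬ mxI k n ≤ P} => (P.1.restrictScalars k).comap V.subtype) (by
          rw [Set.eq_univ_iff_forall]
          rintro ⟨v, hv⟩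
          obtain ⟨P, hP, hPm, hvP⟩ := hcon v hv
          exact Set.mem_iUnion.2 ⟨⟨P, hP, hPm⟩, hvP⟩)
      refine hPm (hV P hP.1.1 fun v hv => ?_)
      have : (⟨v, hv⟩ : V) ∈ (P.restrictScalars k).comap V.subtype := by
        rw [hPtop]; trivial
      exact this
    refine ⟨Fin.cons v G, fun i => ?_, fun P hP hGP => ?_⟩
    · refine Fin.cases ?_ (fun i => ?_) i
      · simpa using hvV
      · simpa using hGV i
    · have hIP : I ≤ P := by
        refine Ideal.span_le.2 ?_
        rintro _ ⟨i, rfl⟩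
        simpa using hGP i.succ
      have hvP : v ∈ P := by simpa using hGP 0
      obtain ⟨P₀, hP₀, hle⟩ := Ideal.exists_minimalPrimes_le hIP
      have hP₀p : P₀.IsPrime := hP₀.1.1
      by_cases hm : mxI k n ≤ P₀
      · exact Or.inl (hm.trans hle)
      right
      have hlt : P₀ < P := lt_of_le_of_ne hle fun h => hv P₀ hP₀ hm (h ▸ hvP)
      have h1 := (hG P₀ hP₀p fun i => hP₀.1.2 (Ideal.subset_span ⟨i, rfl⟩)).resolve_left hm
      have h2 := Ideal.height_add_one_le_of_lt_of_isPrime hlt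
      push_cast
      exact (add_le_add_left h1 1).trans h2

theorem mxI_ne_top (k : Type*) [Field k] (n : ℕ) : mxI k n ≠ ⊤ := by
  rw [Ideal.ne_top_iff_one, mxI_eq_idealOfVars, ← pow_one (idealOfVars _ _),
    mem_pow_idealOfVars_iff']
  intro h
  simpa using h 0 (by simp)

theorem homogeneous_ideal_le_mxI {k : Type*} [Field k] {n : ℕ}
    {P : Ideal (MvPolynomial (Fin (n + 1)) k)} (hP : P ≠ ⊤)
    (hhom : ∀ u ∈ P, ∀ i, homogeneousComponent i u ∈ P) : P ≤ mxI k n := by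
  intro u hu
  have h0 := hhom u hu 0
  rw [homogeneousComponent_zero] at h0
  have hc : coeff 0 u = 0 := by
    by_contra hne
    exact hP (Ideal.eq_top_of_isUnit_mem _ h0 ((isUnit_iff_ne_zero.2 hne).map C))
  rw [mxI_eq_idealOfVars, ← pow_one (idealOfVars _ _), mem_pow_idealOfVars_iff']
  intro x hx
  rw [show x = 0 from (Finsupp.degree_eq_zero_iff x).1 (by omega)]
  exact hc

/-- A linear system of forms of degree `D` without common zero outside the origin contains `n + 1`
members with the same property: a homogeneous prime containing them has height at least `n + 1`
unless it contains `m`, and there is no room for such a prime strictly inside `m`. -/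
theorem exists_system_of_parameters {k : Type*} [Field k] [Infinite k] {n D : ℕ}
    (V : Submodule k (MvPolynomial (Fin (n + 1)) k)) (hD : ∀ v ∈ V, v.IsHomogeneous D)
    (hV : ∀ P : Ideal (MvPolynomial (Fin (n + 1)) k), P.IsPrime → (∀ v ∈ V, v ∈ P) → mxI k n ≤ P) :
    ∃ G : Fin (n + 1) → MvPolynomial (Fin (n + 1)) k, (∀ i, G i ∈ V) ∧
      mxI k n ≤ (Ideal.span (Set.range G)).radical := by
  obtain ⟨G, hGV, hG⟩ := exists_members_height V hV (n + 1)
  refine ⟨G, hGV, ?_⟩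
  have hI : (Ideal.span (Set.range G)).IsHomogeneous (homogeneousSubmodule (Fin (n + 1)) k) := by
    apply Ideal.homogeneous_span
    rintro _ ⟨i, rfl⟩
    exact ⟨D, hD _ (hGV i)⟩
  rw [Ideal.radical_eq_sInf]
  refine le_sInf ?_
  rintro P ⟨hIP, hP⟩
  -- the homogeneous core of `P` is a prime between the homogeneous ideal `(G)` and `P`
  let P' := (P.homogeneousCore (homogeneousSubmodule (Fin (n + 1)) k)).toIdeal
  have hP'P : P' ≤ P := Ideal.toIdeal_homogeneousCore_le _ _
  have hP' : P'.IsPrime := Ideal.IsPrime.homogeneousCore hP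
  have hIP' : Ideal.span (Set.range G) ≤ P' := by
    rw [← hI.toIdeal_homogeneousCore_eq_self]
    exact Ideal.homogeneousCore_mono _ hIP
  refine le_trans ?_ hP'P
  have hle : P' ≤ mxI k n := homogeneous_ideal_le_mxI hP'.ne_top fun u hu i => by
    rw [← coe_decompose_eq]
    exact (P.homogeneousCore (homogeneousSubmodule (Fin (n + 1)) k)).isHomogeneous i hu
  rcases hG P' hP' fun i => hIP' (Ideal.subset_span ⟨i, rfl⟩) with h | h
  · exact h
  by_contra hnle
  have hlt : P' < mxI k n := lt_of_le_not_ge hle hnle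
  obtain ⟨M, hM, hmM⟩ := Ideal.exists_le_maximal _ (mxI_ne_top k n)
  have hMp : M.IsPrime := hM.isPrime
  have h1 := Ideal.height_add_one_le_of_lt_of_isPrime (hlt.trans_le hmM)
  have h2 : (M.height : WithBot ℕ∞) ≤ ((n + 1 : ℕ) : ℕ∞) := by
    refine (Ideal.height_le_ringKrullDim_of_isPrime (I := M)).trans ?_
    rw [MvPolynomial.ringKrullDim_of_isNoetherianRing, ringKrullDim_eq_zero_of_field]
    simp
  have h3 := (add_le_add_left h 1).trans (h1.trans (WithBot.coe_le_coe.1 h2))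
  have h4 : n + 1 + 1 ≤ n + 1 := by exact_mod_cast h3
  omega

/-! ### The degree bound -/

/-- The degree bound for an ideal `τ` whose forms of degree `D` have no common zero outside the
origin. After base change to the algebraic closure, which is infinite, `n + 1` general linear
combinations of these forms generate an ideal primary to the homogeneous maximal ideal. -/
theorem degree_bound {k : Type*} [Field k] {p n : ℕ} [Fact p.Prime] [CharP k p]
    {D e t : ℕ} (τ : Ideal (MvPolynomial (Fin (n + 1)) k))
    (hτ : ∀ P : Ideal (MvPolynomial (Fin (n + 1)) k), P.IsPrime →
      (∀ v ∈ τ, v.IsHomogeneous D → v ∈ P) → mxI k n ≤ P)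
    {g : MvPolynomial (Fin (n + 1)) k} (hg : g.IsHomogeneous t)
    (hgm : g ∉ bracketPow (mxI k n) (p ^ e))
    (hgτ : ∀ v ∈ τ, g * v ∈ bracketPow (mxI k n) (p ^ e)) :
    (n + 1) * p ^ e ≤ t + (n + 1) * D := by
  let K := AlgebraicClosure k
  have : CharP K p := charP_of_injective_algebraMap (algebraMap k K).injective p
  let φ : MvPolynomial (Fin (n + 1)) k →+* MvPolynomial (Fin (n + 1)) K := map (algebraMap k K)
  have hinj : Function.Injective (algebraMap k K) := (algebraMap k K).injective
  have hφ : ∀ u, φ u ∈ bracketPow (mxI K n) (p ^ e) ↔ u ∈ bracketPow (mxI k n) (p ^ e) := by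
    intro u
    rw [mem_bracketPow_mxI, mem_bracketPow_mxI, support_map_of_injective _ hinj]
  let V : Submodule K (MvPolynomial (Fin (n + 1)) K) :=
    Submodule.span K (φ '' {v | v ∈ τ ∧ v.IsHomogeneous D})
  have hVD : ∀ v ∈ V, v.IsHomogeneous D := by
    intro v hv
    have : V ≤ homogeneousSubmodule (Fin (n + 1)) K D := by
      refine Submodule.span_le.2 ?_
      rintro _ ⟨u, hu, rfl⟩
      exact hu.2.map _
    exact this hv
  obtain ⟨G, hGV, hG⟩ := exists_system_of_parameters V hVD fun P hP hVP => by
    have h := hτ (P.comap φ) (hP.comap φ) fun v hv hvD =>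
      hVP _ (Submodule.subset_span ⟨v, ⟨hv, hvD⟩, rfl⟩)
    refine Ideal.span_le.2 ?_
    rintro _ ⟨i, rfl⟩
    have := h (Ideal.subset_span ⟨i, rfl⟩)
    simpa [φ] using this
  refine degree_bound_of_system (p := p) (e := e) (fun i => hVD _ (hGV i)) hG
    (hg.map (algebraMap k K)) (fun h => hgm ((hφ g).1 h)) fun i => ?_
  have : V ≤ ((bracketPow (mxI K n) (p ^ e)).restrictScalars K).comap
      (LinearMap.mulLeft K (φ g)) := by
    refine Submodule.span_le.2 ?_
    rintro _ ⟨u, hu, rfl⟩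
    simp only [SetLike.mem_coe, Submodule.mem_comap, LinearMap.mulLeft_apply,
      Submodule.restrictScalars_mem, ← map_mul, hφ]
    exact hgτ u hu.1
  exact this (hGV i)

/-! ### Cartier operators and generators of the test ideal -/

theorem exists_additive_coords.{u} (k V : Type u) [Field k] [AddCommGroup V] [Module k V] :
    ∃ (ι : Type u) (b : ι → V) (l : ι → V →+ k),
      (∀ i (c : k) x, l i (c • x) = c * l i x) ∧
      ∀ x, ∃ B : Finset ι, ∀ B' : Finset ι, B ⊆ B' → x = ∑ i ∈ B', l i x • b i := by
  let b := Module.Basis.ofVectorSpace k V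
  refine ⟨_, fun i => b i, fun i => (b.coord i).toAddMonoidHom, fun i c x => ?_, fun x => ?_⟩
  · simp
  · refine ⟨(b.repr x).support, fun B' hB => ?_⟩
    conv_lhs => rw [← b.linearCombination_repr x]
    rw [Finsupp.linearCombination_apply, Finsupp.sum, Finset.sum_subset hB]
    · rfl
    · intro i _ hi
      rw [Finsupp.notMem_support_iff.1 hi, zero_smul]

/-- Coordinates of a field over its Frobenius: a basis `b` of `k` over `k ^ p`, with additive
coordinate functions `l` that are `p`-th roots of the linear coordinates. -/
theorem exists_frobenius_coords.{u} (k : Type u) [Field k] (p : ℕ) [Fact p.Prime] [CharP k p] :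
    ∃ (ι : Type u) (b : ι → k) (l : ι → k →+ k),
      (∀ i c x, l i (c ^ p * x) = c * l i x) ∧
      ∀ x, ∃ B : Finset ι, ∀ B' : Finset ι, B ⊆ B' → x = ∑ i ∈ B', b i * l i x ^ p := by
  -- `k` is viewed as a vector space over itself through the Frobenius, so `c • x = c ^ p * x`
  obtain ⟨ι, b, l, hl, hb⟩ := @exists_additive_coords k k _ _ (Module.compHom k (frobenius k p))
  refine ⟨ι, b, l, hl, fun x => ?_⟩
  obtain ⟨B, hB⟩ := hb x
  refine ⟨B, fun B' h => (hB B' h).trans (Finset.sum_congr rfl fun i _ => ?_)⟩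
  exact mul_comm (l i x ^ p) (b i)

section Cartier

theorem smul_div_add_mod {σ : Type*} (p : ℕ) (s : σ →₀ ℕ) :
    p • s.mapRange (· / p) (Nat.zero_div p) + s.mapRange (· % p) (Nat.zero_mod p) = s := by
  ext i
  simp [Nat.div_add_mod]

variable {k σ : Type*} [Field k] [DecidableEq σ] {p : ℕ}

/-- The Cartier-type operator attached to an exponent `a` and an additive map `l` on the
coefficient field: it sends `∑ c_s x^s` to `∑_m l(c_{pm+a}) x^m`. The exponent `a` is meant to have
entries smaller than `p`, so that the summation is over the exponents `s` congruent to `a`. -/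
def cartier (p : ℕ) (a : σ →₀ ℕ) (l : k →+ k) (v : MvPolynomial σ k) : MvPolynomial σ k :=
  ∑ s ∈ v.support with s.mapRange (· % p) (Nat.zero_mod p) = a,
    monomial (s.mapRange (· / p) (Nat.zero_div p)) (l (coeff s v))

theorem coeff_cartier {a : σ →₀ ℕ} (ha : ∀ i, a i < p) (l : k →+ k)
    (v : MvPolynomial σ k) (m : σ →₀ ℕ) :
    coeff m (cartier p a l v) = l (coeff (p • m + a) v) := by
  classical
  have hmod : (p • m + a).mapRange (· % p) (Nat.zero_mod p) = a := by
    ext i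
    simp [Nat.mod_eq_of_lt (ha i)]
  have hdiv : (p • m + a).mapRange (· / p) (Nat.zero_div p) = m := by
    ext i
    have hp : 0 < p := (Nat.zero_le _).trans_lt (ha i)
    simp [Nat.mul_add_div hp, Nat.div_eq_of_lt (ha i)]
  rw [cartier, coeff_sum]
  simp only [coeff_monomial]
  rw [Finset.sum_eq_single (p • m + a)]
  · rw [if_pos hdiv]
  · intro s hs hne
    rw [if_neg]
    rintro rfl
    apply hne
    rw [← (Finset.mem_filter.1 hs).2, smul_div_add_mod]
  · intro h
    have : coeff (p • m + a) v = 0 := by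
      by_contra h0
      exact h (Finset.mem_filter.2 ⟨mem_support_iff.2 h0, hmod⟩)
    simp [this]

theorem cartier_add {a : σ →₀ ℕ} (ha : ∀ i, a i < p) (l : k →+ k) (v w : MvPolynomial σ k) :
    cartier p a l (v + w) = cartier p a l v + cartier p a l w := by
  ext m
  simp [coeff_cartier ha]

/-- The operator is `p⁻¹`-linear. -/
theorem cartier_pow_mul [Fact p.Prime] [CharP k p] {a : σ →₀ ℕ} (ha : ∀ i, a i < p) {l : k →+ k}
    (hl : ∀ c x, l (c ^ p * x) = c * l x) (u v : MvPolynomial σ k) :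
    cartier p a l (u ^ p * v) = u * cartier p a l v := by
  have hp : 0 < p := (Fact.out : p.Prime).pos
  induction u using MvPolynomial.induction_on' with
  | add u₁ u₂ h₁ h₂ => rw [add_pow_char, add_mul, cartier_add ha, h₁, h₂, add_mul]
  | monomial r c =>
    ext m
    rw [coeff_cartier ha, monomial_pow, coeff_monomial_mul', coeff_monomial_mul',
      coeff_cartier ha]
    have hiff : p • r ≤ p • m + a ↔ r ≤ m := by
      constructor
      · intro h i
        by_contra! hlt
        have h1 := h i
        have h2 := ha i
        have h3 : p * (m i + 1) ≤ p * r i := Nat.mul_le_mul_left _ hlt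
        simp only [Finsupp.smul_apply, Finsupp.add_apply, smul_eq_mul] at h1
        rw [mul_add] at h3
        omega
      · intro h i
        have := Nat.mul_le_mul_left p (h i)
        simp only [Finsupp.smul_apply, Finsupp.add_apply, smul_eq_mul]
        omega
    by_cases hrm : r ≤ m
    · rw [if_pos (hiff.2 hrm), if_pos hrm, hl]
      congr 3
      ext i
      have := Nat.mul_le_mul_left p (hrm i)
      simp only [Finsupp.smul_apply, Finsupp.add_apply, Finsupp.tsub_apply, smul_eq_mul,
        Nat.mul_sub]
      omega
    · rw [if_neg (mt hiff.1 hrm), if_neg hrm, map_zero]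

theorem cartier_mem_of_mem_bracketPow [Fact p.Prime] [CharP k p] {a : σ →₀ ℕ} (ha : ∀ i, a i < p)
    {l : k →+ k} (hl : ∀ c x, l (c ^ p * x) = c * l x) {I : Ideal (MvPolynomial σ k)}
    {v : MvPolynomial σ k} (hv : v ∈ bracketPow I p) : cartier p a l v ∈ I := by
  refine Submodule.span_induction (p := fun v _ => ∀ r, cartier p a l (r * v) ∈ I)
    ?_ ?_ ?_ ?_ hv 1 |> (by simpa using ·)
  · rintro _ ⟨u, hu, rfl⟩ r
    rw [mul_comm, cartier_pow_mul ha hl]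
    exact I.mul_mem_right _ hu
  · intro r
    rw [mul_zero]
    convert I.zero_mem
    ext m
    simp [coeff_cartier ha]
  · intro x y _ _ hx hy r
    rw [mul_add, cartier_add ha]
    exact I.add_mem (hx r) (hy r)
  · intro c x _ hx r
    rw [smul_eq_mul, ← mul_assoc]
    exact hx _

theorem cartier_mem_testIdeal [Fact p.Prime] [CharP k p] {a : σ →₀ ℕ} (ha : ∀ i, a i < p)
    {l : k →+ k} (hl : ∀ c x, l (c ^ p * x) = c * l x) (f : MvPolynomial σ k) :
    cartier p a l (f ^ (p - 1)) ∈ testIdeal p f 1 := by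
  rw [testIdeal, Ideal.mem_sInf]
  intro I hI
  apply cartier_mem_of_mem_bracketPow ha hl
  simpa using hI

/-- Every polynomial lies in the bracket power of the ideal generated by its images under the
operators attached to a coordinate system of `k` over `k ^ p`. -/
theorem mem_bracketPow_of_cartier_mem [Fact p.Prime] [CharP k p] {ι : Type*} {b : ι → k}
    {l : ι → k →+ k}
    (hb : ∀ x, ∃ B : Finset ι, ∀ B' : Finset ι, B ⊆ B' → x = ∑ i ∈ B', b i * l i x ^ p)
    {I : Ideal (MvPolynomial σ k)} {v : MvPolynomial σ k}
    (hI : ∀ a : σ →₀ ℕ, (∀ i, a i < p) → ∀ i, cartier p a (l i) v ∈ I) :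
    v ∈ bracketPow I p := by
  classical
  have hp : 0 < p := (Fact.out : p.Prime).pos
  choose B hB using hb
  let B' := v.support.biUnion fun s => B (coeff s v)
  let md : (σ →₀ ℕ) → (σ →₀ ℕ) := fun s => s.mapRange (· % p) (Nat.zero_mod p)
  let dv : (σ →₀ ℕ) → (σ →₀ ℕ) := fun s => s.mapRange (· / p) (Nat.zero_div p)
  have hv : v = ∑ i ∈ B', ∑ a ∈ v.support.image md,
      (C (b i) * monomial a 1) * cartier p a (l i) v ^ p := by
    conv_lhs => rw [v.as_sum]
    rw [Finset.sum_comm, ← Finset.sum_fiberwise_of_maps_to (g := md)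
      (fun s hs => Finset.mem_image_of_mem md hs)]
    refine Finset.sum_congr rfl fun a _ => ?_
    simp only [cartier, sum_pow_char, Finset.mul_sum]
    rw [Finset.sum_comm]
    refine Finset.sum_congr rfl fun s hs => ?_
    obtain ⟨hs, hsa⟩ := Finset.mem_filter.1 hs
    conv_lhs => rw [hB (coeff s v) B' (Finset.subset_biUnion_of_mem (fun s => B (coeff s v)) hs)]
    rw [map_sum]
    refine Finset.sum_congr rfl fun i _ => ?_
    rw [monomial_pow, C_mul_monomial, monomial_mul, mul_one, ← hsa, add_comm, smul_div_add_mod]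
  rw [hv]
  refine Ideal.sum_mem _ fun i _ => Ideal.sum_mem _ fun a ha => Ideal.mul_mem_left _ _ ?_
  obtain ⟨s, _, rfl⟩ := Finset.mem_image.1 ha
  exact Ideal.subset_span ⟨_, hI _ (fun j => by simpa [md] using Nat.mod_lt _ hp) i, rfl⟩

/-- The image of `f ^ (p - 1)` is a form of some degree `c` with `p c ≤ d (p - 1)`, which forces
`c ≤ d - 1`; truncated subtraction is harmless for `d = 0`, where `c = 0`. -/
theorem cartier_isHomogeneous [Fact p.Prime] {a : σ →₀ ℕ} (ha : ∀ i, a i < p) (l : k →+ k)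
    {f : MvPolynomial σ k} {d : ℕ} (hf : f.IsHomogeneous d) :
    ∃ c ≤ d - 1, (cartier p a l (f ^ (p - 1))).IsHomogeneous c := by
  have hp : 2 ≤ p := (Fact.out : p.Prime).two_le
  have hdeg : ∀ m, coeff m (cartier p a l (f ^ (p - 1))) ≠ 0 →
      p * m.degree + a.degree = d * (p - 1) := by
    intro m hm
    rw [coeff_cartier ha] at hm
    have hne : coeff (p • m + a) (f ^ (p - 1)) ≠ 0 := fun h => hm (by rw [h, map_zero])
    have := isHomogeneous_iff_degree.1 (hf.pow (p - 1)) _ hne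
    simpa using this
  by_cases h0 : cartier p a l (f ^ (p - 1)) = 0
  · exact ⟨0, Nat.zero_le _, h0 ▸ isHomogeneous_zero _ _ _⟩
  obtain ⟨m, hm⟩ := ne_zero_iff.1 h0
  refine ⟨m.degree, ?_, isHomogeneous_iff_degree.2 fun m' hm' => ?_⟩
  · have h1 := hdeg m hm
    rcases Nat.eq_zero_or_pos d with rfl | hd
    · have : m.degree = 0 := by
        by_contra hne
        have := Nat.mul_pos (by omega : 0 < p) (Nat.pos_of_ne_zero hne)
        omega
      omega
    · by_contra! hlt
      obtain ⟨w, rfl⟩ : ∃ w, p = w + 1 := ⟨p - 1, by omega⟩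
      have h2 : (w + 1) * d ≤ (w + 1) * m.degree := Nat.mul_le_mul_left _ (by omega)
      simp only [Nat.add_sub_cancel] at h1
      nlinarith
  · have h1 := hdeg m hm
    have h2 := hdeg m' hm'
    exact Nat.eq_of_mul_eq_mul_left (by omega : 0 < p) (by omega)

end Cartier

/-- `τ` is generated by forms of degree less than `d`, so the forms of degree `d - 1` in `τ` already
cut out the origin. -/
theorem mxI_le_of_forms_mem {k : Type*} [Field k] {p n : ℕ} [Fact p.Prime] [CharP k p]
    {f : MvPolynomial (Fin (n + 1)) k} {d : ℕ} (hf : f.IsHomogeneous d)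
    (hrad : (testIdeal p f 1).radical = mxI k n)
    {P : Ideal (MvPolynomial (Fin (n + 1)) k)} (hP : P.IsPrime)
    (hforms : ∀ v ∈ testIdeal p f 1, v.IsHomogeneous (d - 1) → v ∈ P) : mxI k n ≤ P := by
  obtain ⟨ι, b, l, hl, hb⟩ := exists_frobenius_coords k p
  refine Ideal.span_le.2 ?_
  rintro _ ⟨j, rfl⟩
  by_contra hj
  refine hj ((hrad ▸ hP.radical_le_iff.2 ?_ : mxI k n ≤ P) (Ideal.subset_span ⟨j, rfl⟩))
  refine sInf_le ?_
  simp only [Set.mem_ofPred_eq, pow_one]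
  refine mem_bracketPow_of_cartier_mem hb fun a ha i => ?_
  obtain ⟨c, hc, hhom⟩ := cartier_isHomogeneous ha (l i) hf
  have hmem : X j ^ (d - 1 - c) * cartier p a (l i) (f ^ (p - 1)) ∈ P := by
    refine hforms _ (Ideal.mul_mem_left _ _ (cartier_mem_testIdeal ha (hl i) f)) ?_
    have := (isHomogeneous_X_pow (R := k) j (d - 1 - c)).mul hhom
    rwa [Nat.sub_add_cancel hc] at this
  exact (hP.mem_or_mem hmem).resolve_left fun h => hj (hP.mem_of_pow_mem _ h)

theorem degree_pos {k : Type*} [Field k] {p n : ℕ} [Fact p.Prime] [CharP k p]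
    {f : MvPolynomial (Fin (n + 1)) k} {d : ℕ} (hf : f.IsHomogeneous d)
    (hτm : testIdeal p f 1 ≤ mxI k n)
    (hrad : (testIdeal p f 1).radical = mxI k n) : 0 < d := by
  have hp : 2 ≤ p := (Fact.out : p.Prime).two_le
  by_contra! hd
  obtain rfl : d = 0 := by omega
  by_cases h0 : f = 0
  -- for `f = 0` the test ideal is `0`, whose radical misses `x_0`
  · have hbot : testIdeal p f 1 = ⊥ := by
      refine le_bot_iff.1 (sInf_le ?_)
      simp only [Set.mem_ofPred_eq, pow_one]
      rw [h0, zero_pow (by omega)]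
      exact Ideal.zero_mem _
    have hX : (X 0 : MvPolynomial (Fin (n + 1)) k) ∈ mxI k n := Ideal.subset_span ⟨0, rfl⟩
    rw [← hrad, hbot] at hX
    obtain ⟨N, hN⟩ := hX
    exact X_ne_zero 0 (eq_zero_of_pow_eq_zero hN)
  -- for a nonzero constant `f` the test ideal is the whole ring
  · refine mxI_ne_top k n (top_le_iff.1 (le_trans ?_ hτm))
    refine le_sInf fun I hI => top_le_iff.2 ?_
    simp only [Set.mem_ofPred_eq, pow_one] at hI
    have hu : IsUnit f := by
      rw [totalDegree_eq_zero_iff_eq_C.1 (hf.totalDegree h0)]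
      refine IsUnit.map C (isUnit_iff_ne_zero.2 fun h => h0 ?_)
      rw [totalDegree_eq_zero_iff_eq_C.1 (hf.totalDegree h0), h, C_0]
    have hle : bracketPow I p ≤ I := by
      refine Ideal.span_le.2 ?_
      rintro _ ⟨u, hu, rfl⟩
      exact I.pow_mem_of_mem hu p (by omega)
    exact Ideal.eq_top_of_isUnit_mem _ (hle hI) (hu.pow _)

/-- If `f` is homogeneous of degree `d`, `τ(f^{1−1/p}) ⊆ m` and
`√τ(f^{1−1/p}) = m`, then `δ(f) + d > −n(d−1)`; equivalently,
`M_e − (n+1)p^e + d > −n(d−1)` for all `e ≥ e_0`. -/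
theorem delta_add_d_gt {k : Type*} [Field k] {p n : ℕ} [Fact p.Prime] [CharP k p]
    (f : MvPolynomial (Fin (n + 1)) k) (d : ℕ) (hf : f.IsHomogeneous d)
    (hτm : testIdeal p f 1 ≤ mxI k n)
    (hrad : (testIdeal p f 1).radical = mxI k n)
    (δ : ℤ)
    (hδ : ∃ E : ℕ, ∀ e ≥ E, (Me k n p (testIdeal p f 1) e : ℤ) - (n + 1) * p ^ e = δ) :
    δ + d > -(n : ℤ) * (d - 1) ∧
      ∀ e ≥ e0 k n p (testIdeal p f 1),
        (Me k n p (testIdeal p f 1) e : ℤ) - (n + 1) * p ^ e + d > -(n : ℤ) * (d - 1) := by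
  have hd := degree_pos hf hτm hrad
  have main : ∀ e, (Me k n p (testIdeal p f 1) e : ℤ) - (n + 1) * p ^ e + d
      > -(n : ℤ) * (d - 1) := by
    intro e
    obtain ⟨g, hgc, hgm, hg⟩ := Nat.sInf_mem (MeSet_nonempty (p := p) hτm e)
    have h := degree_bound (testIdeal p f 1)
      (fun P hP hforms => mxI_le_of_forms_mem hf hrad hP hforms) hg hgm
      fun v hv => Submodule.mem_colon.1 hgc v hv
    obtain ⟨D, rfl⟩ : ∃ D, d = D + 1 := ⟨d - 1, by omega⟩
    change _ ≤ Me k n p (testIdeal p f 1) e + _ at h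
    simp only [Nat.add_sub_cancel] at h
    zify at h
    push_cast
    linarith
  refine ⟨?_, fun e _ => main e⟩
  obtain ⟨E, hE⟩ := hδ
  rw [← hE E le_rfl]
  exact main E

end
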